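/- Let G be a non-complete simple graph on n vertices achieving its toughness at a set S (t(G) = |S|/c(G−S)) such that the union of some subfamily of components of G − S has exactly (n−|S|)/2 vertices. Then t(G) ≥ μ_2/(μ_n − δ). -/

import Mathlib

open SimpleGraph Matrix

/-- The (unordered) eigenvalues of the Laplacian matrix `L = D - A` of `G`. -/
noncomputable def lapEigs {V : Type*} [Fintype V] [DecidableEq V]
    (G : SimpleGraph V) [DecidableRel G.Adj] : V → ℝ :=
  (SimpleGraph.posSemidef_lapMatrix ℝ G).1.eigenvalues

/-- `μ : Fin n → ℝ` is the nondecreasing list of the Laplacian eigenvalues of `G`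
(so `μ 0 = μ_1 ≤ μ 1 = μ_2 ≤ … ≤ μ (n-1) = μ_n`). -/
def IsLapSpectrum {V : Type*} [Fintype V] [DecidableEq V]
    (G : SimpleGraph V) [DecidableRel G.Adj] {n : ℕ} (μ : Fin n → ℝ) : Prop :=
  Monotone μ ∧ ∃ σ : Fin n ≃ V, ∀ i, μ i = lapEigs G (σ i)

/-- The number of connected components of `G - S`. -/
noncomputable def numComp {V : Type*} (G : SimpleGraph V) (S : Finset V) : ℕ :=
  Nat.card (G.induce ((↑S : Set V)ᶜ)).ConnectedComponent

section aux
variable {V : Type*} [Fintype V] [DecidableEq V] (G : SimpleGraph V) [DecidableRel G.Adj]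

/-- The eigenvectors, as plain functions. -/
noncomputable def lapVec (i : V) : V → ℝ :=
  ⇑((SimpleGraph.posSemidef_lapMatrix ℝ G).1.eigenvectorBasis i)

lemma lapVec_mulVec (i : V) : G.lapMatrix ℝ *ᵥ lapVec G i = lapEigs G i • lapVec G i :=
  (SimpleGraph.posSemidef_lapMatrix ℝ G).1.mulVec_eigenvectorBasis i

lemma lapVec_parseval (x y : V → ℝ) :
    ∑ i, (lapVec G i ⬝ᵥ x) * (lapVec G i ⬝ᵥ y) = x ⬝ᵥ y := by
  have h := (SimpleGraph.posSemidef_lapMatrix ℝ G).1.eigenvectorBasis.sum_inner_mul_inner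
    (WithLp.toLp 2 x) (WithLp.toLp 2 y)
  simp only [EuclideanSpace.inner_eq_star_dotProduct, star_trivial] at h
  rw [dotProduct_comm x y, ← h]
  refine Finset.sum_congr rfl fun i _ => ?_
  rw [dotProduct_comm (lapVec G i) y]
  rfl

lemma lapVec_lap (i : V) (x : V → ℝ) :
    lapVec G i ⬝ᵥ (G.lapMatrix ℝ *ᵥ x) = lapEigs G i * (lapVec G i ⬝ᵥ x) := by
  rw [dotProduct_mulVec, ← mulVec_transpose, (G.isSymm_lapMatrix (R := ℝ)).eq, lapVec_mulVec,
    smul_dotProduct, smul_eq_mul]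

lemma quad_eq (x : V → ℝ) :
    x ⬝ᵥ (G.lapMatrix ℝ *ᵥ x) = ∑ i, lapEigs G i * (lapVec G i ⬝ᵥ x) ^ 2 := by
  rw [← lapVec_parseval G]
  refine Finset.sum_congr rfl fun i _ => ?_
  rw [lapVec_lap]; ring

lemma norm_eq (x : V → ℝ) : x ⬝ᵥ x = ∑ i, (lapVec G i ⬝ᵥ x) ^ 2 := by
  rw [← lapVec_parseval G]
  refine Finset.sum_congr rfl fun i _ => ?_
  ring

lemma quad_le (M : ℝ) (hM : ∀ i, lapEigs G i ≤ M) (x : V → ℝ) :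
    x ⬝ᵥ (G.lapMatrix ℝ *ᵥ x) ≤ M * (x ⬝ᵥ x) := by
  rw [quad_eq, norm_eq G, Finset.mul_sum]
  exact Finset.sum_le_sum fun i _ => mul_le_mul_of_nonneg_right (hM i) (sq_nonneg _)

lemma lapEigs_nonneg (i : V) : 0 ≤ lapEigs G i :=
  (SimpleGraph.posSemidef_lapMatrix ℝ G).eigenvalues_nonneg i

lemma le_quad (m : ℝ) (k : V) (hm : ∀ i, i ≠ k → m ≤ lapEigs G i) (x : V → ℝ)
    (hx : ∑ i, x i = 0) : m * (x ⬝ᵥ x) ≤ x ⬝ᵥ (G.lapMatrix ℝ *ᵥ x) := by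
  rw [quad_eq, norm_eq G, Finset.mul_sum]
  rcases le_or_gt m 0 with h0 | h0
  · refine Finset.sum_le_sum fun i _ => mul_le_mul_of_nonneg_right
      (h0.trans (lapEigs_nonneg G i)) (sq_nonneg _)
  · have hone : ∀ i, i ≠ k → lapVec G i ⬝ᵥ (fun _ => (1 : ℝ)) = 0 := by
      intro i hi
      have h := lapVec_lap G i (fun _ => (1 : ℝ))
      rw [SimpleGraph.lapMatrix_mulVec_const_eq_zero, dotProduct_zero] at h
      rcases mul_eq_zero.1 h.symm with h | h
      · linarith [hm i hi]
      · exact h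
    have hk : lapVec G k ⬝ᵥ x = 0 := by
      have h1 := lapVec_parseval G (fun _ => (1 : ℝ)) x
      rw [Finset.sum_eq_single k (fun i _ hi => by rw [hone i hi, zero_mul]) (by simp)] at h1
      have h2 := lapVec_parseval G (fun _ => (1 : ℝ)) (fun _ => (1 : ℝ))
      rw [Finset.sum_eq_single k (fun i _ hi => by rw [hone i hi, zero_mul]) (by simp)] at h2
      have h3 : (fun _ => (1 : ℝ)) ⬝ᵥ x = 0 := by simpa [dotProduct] using hx
      rw [h3] at h1
      rcases mul_eq_zero.1 h1 with h | h
      · rw [h] at h2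
        have : 0 < Fintype.card V := Fintype.card_pos_iff.2 ⟨k⟩
        have h4 : (0 : ℝ) < Fintype.card V := by exact_mod_cast this
        simp only [dotProduct, mul_one, zero_mul, Finset.sum_const, Finset.card_univ,
          nsmul_eq_mul] at h2
        linarith
      · exact h
    refine Finset.sum_le_sum fun i _ => ?_
    by_cases hi : i = k
    · subst hi; simp [hk]
    · exact mul_le_mul_of_nonneg_right (hm i hi) (sq_nonneg _)

lemma quad_edges (x : V → ℝ) : x ⬝ᵥ (G.lapMatrix ℝ *ᵥ x) =
    (∑ i, ∑ j, if G.Adj i j then (x i - x j) ^ 2 else 0) / 2 := by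
  rw [← SimpleGraph.lapMatrix_toLinearMap₂' ℝ G x, Matrix.toLinearMap₂'_apply']

/-- Indicator vector. -/
def indic (T : Finset V) : V → ℝ := fun i => if i ∈ T then 1 else 0

lemma cut_le (M : ℝ) (hM : ∀ i, lapEigs G i ≤ M) (T : Finset V) (hV : 0 < Fintype.card V) :
    (Fintype.card V : ℝ) * (indic T ⬝ᵥ (G.lapMatrix ℝ *ᵥ indic T)) ≤
      M * (T.card * (Fintype.card V - T.card)) := by
  have hV' : (0 : ℝ) < Fintype.card V := by exact_mod_cast hV
  set N : ℝ := ((Fintype.card V : ℕ) : ℝ) with hN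
  have h := quad_le G M hM (fun i => N * indic T i - T.card)
  have h1 : (fun i => N * indic T i - T.card) ⬝ᵥ
      (G.lapMatrix ℝ *ᵥ (fun i => N * indic T i - T.card)) =
      N ^ 2 * (indic T ⬝ᵥ (G.lapMatrix ℝ *ᵥ indic T)) := by
    rw [quad_edges, quad_edges, mul_div_assoc', Finset.mul_sum]
    congr 1
    refine Finset.sum_congr rfl fun i _ => ?_
    rw [Finset.mul_sum]
    refine Finset.sum_congr rfl fun j _ => ?_
    split_ifs <;> ring
  have h2 : (fun i => N * indic T i - (T.card : ℝ)) ⬝ᵥ (fun i => N * indic T i - T.card) =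
      N * (T.card * (N - T.card)) := by
    have : ∀ i, (N * indic T i - (T.card : ℝ)) * (N * indic T i - T.card) =
        (N ^ 2 - 2 * N * T.card) * indic T i + (T.card : ℝ) ^ 2 := by
      intro i; unfold indic; split_ifs <;> ring
    simp only [dotProduct, this, Finset.sum_add_distrib, ← Finset.mul_sum]
    simp [indic, ← hN]
    ring
  rw [h1, h2] at h
  refine le_of_mul_le_mul_left ?_ hV'
  linarith

lemma indep_quad (I : Finset V) (hI : ∀ i ∈ I, ∀ j ∈ I, ¬ G.Adj i j) :
    (G.minDegree : ℝ) * I.card ≤ indic I ⬝ᵥ (G.lapMatrix ℝ *ᵥ indic I) := by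
  have : indic I ⬝ᵥ (G.lapMatrix ℝ *ᵥ indic I) = ∑ i ∈ I, (G.degree i : ℝ) := by
    simp only [dotProduct]
    rw [← Finset.sum_subset (Finset.subset_univ I)]
    · refine Finset.sum_congr rfl fun i hi => ?_
      rw [SimpleGraph.lapMatrix_mulVec_apply, Finset.sum_eq_zero]
      · simp [indic, hi]
      · intro j hj
        have : j ∉ I := fun hj' => hI i hi j hj' (by simpa using hj)
        simp [indic, this]
    · intro i _ hi; simp [indic, hi]
  rw [this, mul_comm, ← nsmul_eq_mul]
  exact Finset.card_nsmul_le_sum _ _ _ fun i _ => by exact_mod_cast G.minDegree_le_degree i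

lemma exists_indep (S : Finset V) :
    ∃ I : Finset V, I.card = numComp G S ∧ ∀ i ∈ I, ∀ j ∈ I, ¬ G.Adj i j := by
  classical
  set H := G.induce ((↑S : Set V)ᶜ) with hH
  have : Finite H.ConnectedComponent := Quot.finite _
  have : Fintype H.ConnectedComponent := Fintype.ofFinite _
  choose f hf using fun c : H.ConnectedComponent => c.exists_rep
  refine ⟨Finset.univ.image fun c => (f c : V), ?_, ?_⟩
  · rw [Finset.card_image_of_injective, Finset.card_univ, numComp, Nat.card_eq_fintype_card]
    intro c d h
    have h' : f c = f d := Subtype.ext h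
    rw [← hf c, ← hf d, h']
  · intro i hi j hj hadj
    simp only [Finset.mem_image, Finset.mem_univ, true_and] at hi hj
    obtain ⟨c, rfl⟩ := hi
    obtain ⟨d, rfl⟩ := hj
    have ha : H.Adj (f c) (f d) := hadj
    have hcd : c = d := by
      rw [← hf c, ← hf d]
      exact SimpleGraph.ConnectedComponent.sound ha.reachable
    subst hcd
    exact G.irrefl hadj

lemma sep_quad (S X Y : Finset V) (hXY : Disjoint X Y) (hU : X ∪ Y = Sᶜ)
    (hno : ∀ x ∈ X, ∀ y ∈ Y, ¬ G.Adj x y) :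
    (fun i => indic X i - indic Y i) ⬝ᵥ
      (G.lapMatrix ℝ *ᵥ (fun i => indic X i - indic Y i)) =
    indic S ⬝ᵥ (G.lapMatrix ℝ *ᵥ indic S) := by
  rw [quad_edges, quad_edges]
  congr 1
  refine Finset.sum_congr rfl fun i _ => Finset.sum_congr rfl fun j _ => ?_
  split_ifs with ha
  · have mem : ∀ k, (k ∈ X ∧ k ∉ Y ∧ k ∉ S) ∨ (k ∉ X ∧ k ∈ Y ∧ k ∉ S) ∨
        (k ∉ X ∧ k ∉ Y ∧ k ∈ S) := by
      intro k
      have h1 := Finset.ext_iff.1 hU k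
      simp only [Finset.mem_union, Finset.mem_compl] at h1
      have h2 : k ∈ X → k ∉ Y := fun h => Finset.disjoint_left.1 hXY h
      tauto
    have n1 : i ∈ X → j ∈ Y → False := fun h h' => hno i h j h' ha
    have n2 : j ∈ X → i ∈ Y → False := fun h h' => hno j h i h' ha.symm
    unfold indic
    rcases mem i with ⟨a, b, c⟩ | ⟨a, b, c⟩ | ⟨a, b, c⟩ <;>
    rcases mem j with ⟨a', b', c'⟩ | ⟨a', b', c'⟩ | ⟨a', b', c'⟩ <;>
    simp_all
  · rfl

end aux

theorem stmt7 {n : ℕ} [NeZero n] (hn : 2 ≤ n) (G : SimpleGraph (Fin n)) [DecidableRel G.Adj]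
    (hnc : G ≠ ⊤) (μ : Fin n → ℝ) (hμ : IsLapSpectrum G μ)
    (S : Finset (Fin n)) (hdis : 2 ≤ numComp G S)
    (hmin : ∀ T : Finset (Fin n), 2 ≤ numComp G T →
      (S.card : ℝ) / numComp G S ≤ (T.card : ℝ) / numComp G T)
    (hhalf : ∃ X Y : Finset (Fin n), Disjoint X Y ∧ X ∪ Y = Sᶜ ∧
      (∀ x ∈ X, ∀ y ∈ Y, ¬ G.Adj x y) ∧ 2 * X.card = n - S.card) :
    μ ⟨1, by omega⟩ / (μ ⟨n - 1, by omega⟩ - G.minDegree) ≤ (S.card : ℝ) / numComp G S := by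
  obtain ⟨hmono, σ, hσ⟩ := hμ
  obtain ⟨X, Y, hXY, hU, hno, hX⟩ := hhalf
  set M := μ ⟨n - 1, by omega⟩ with hMdef
  set m := μ ⟨1, by omega⟩ with hmdef
  have hM : ∀ i, lapEigs G i ≤ M := by
    intro i
    have h := hσ (σ.symm i)
    rw [Equiv.apply_symm_apply] at h
    rw [← h]
    apply hmono
    rw [Fin.le_def]
    have := (σ.symm i).2
    simp only
    omega
  have hm : ∀ i, i ≠ σ ⟨0, by omega⟩ → m ≤ lapEigs G i := by
    intro i hi
    have h := hσ (σ.symm i)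
    rw [Equiv.apply_symm_apply] at h
    rw [← h]
    apply hmono
    rw [Fin.le_def]
    by_contra hlt
    apply hi
    rw [← Equiv.symm_apply_eq]
    ext
    simp only at hlt ⊢
    omega
  have hM0 : 0 ≤ M := (lapEigs_nonneg G (σ ⟨0, by omega⟩)).trans (hM _)
  obtain ⟨I, hIc, hI⟩ := exists_indep G S
  have hcn : (0 : ℝ) < n := by exact_mod_cast (by omega : 0 < n)
  have hc2 : (2 : ℝ) ≤ numComp G S := by exact_mod_cast hdis
  have hcutI := cut_le G M hM I (by simp; omega)
  have hcutS := cut_le G M hM S (by simp; omega)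
  have hindep := indep_quad G I hI
  simp only [Fintype.card_fin] at hcutI hcutS
  rw [hIc] at hcutI hindep
  have hSn : S.card < n := by
    by_contra hlt
    have hSu : S = Finset.univ := by
      apply Finset.eq_univ_of_card
      have := S.card_le_univ
      simp only [Fintype.card_fin] at this ⊢
      omega
    subst hSu
    have : numComp G Finset.univ = 0 := by
      unfold numComp
      rw [Nat.card_eq_zero]
      left
      refine ⟨fun c => ?_⟩
      obtain ⟨v, -⟩ := c.exists_rep
      exact v.2 (by simp)
    omega
  have hYX : X.card = Y.card := by
    have h1 := Finset.card_union_of_disjoint hXY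
    rw [hU, Finset.card_compl, Fintype.card_fin] at h1
    omega
  have hlow := le_quad G m _ hm (fun i => indic X i - indic Y i) (by
    simp [indic, Finset.sum_sub_distrib, hYX])
  rw [sep_quad G S X Y hXY hU hno] at hlow
  have hnorm : (fun i => indic X i - indic Y i) ⬝ᵥ (fun i => indic X i - indic Y i) =
      (n : ℝ) - S.card := by
    have : ∀ i, (indic X i - indic Y i) * (indic X i - indic Y i) = indic X i + indic Y i := by
      intro i
      have h2 : i ∈ X → i ∉ Y := fun h => Finset.disjoint_left.1 hXY h
      unfold indic
      by_cases h : i ∈ X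
      · simp [h, h2 h]
      · by_cases h' : i ∈ Y <;> simp [h, h']
    simp only [dotProduct, this, Finset.sum_add_distrib]
    simp only [indic, Finset.sum_ite_mem, Finset.univ_inter, Finset.sum_const, nsmul_eq_mul,
      mul_one]
    rw [← hYX, ← Nat.cast_sub hSn.le, ← hX]
    push_cast; ring
  rw [hnorm] at hlow
  have hs : (0 : ℝ) < n - S.card := by
    have : (S.card : ℝ) < n := by exact_mod_cast hSn
    linarith
  set c : ℝ := ((numComp G S : ℕ) : ℝ) with hc
  set d : ℝ := ((G.minDegree : ℕ) : ℝ) with hd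
  have hd0 : 0 ≤ d := by rw [hd]; positivity
  have hc0 : 0 < c := by linarith
  -- main inequalities
  have e1 : n * m ≤ M * S.card := by
    refine le_of_mul_le_mul_right ?_ hs
    nlinarith [mul_le_mul_of_nonneg_left hlow hcn.le]
  have e2 : n * d ≤ M * (n - c) := by
    refine le_of_mul_le_mul_right ?_ hc0
    nlinarith [mul_le_mul_of_nonneg_left hindep hcn.le]
  rcases hM0.eq_or_lt with h0 | h0
  · have : d = 0 := by
      rw [← h0, zero_mul] at e2
      nlinarith
    rw [this, ← h0, sub_zero, div_zero]
    positivity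
  · have hpos : 0 < M - d := by
      have : 0 < (n : ℝ) * (M - d) := by nlinarith [mul_pos h0 hc0]
      exact pos_of_mul_pos_right this hcn.le
    rw [div_le_div_iff₀ hpos hc0]
    refine le_of_mul_le_mul_left ?_ hcn
    have hs0 : (0 : ℝ) ≤ S.card := by positivity
    nlinarith [mul_le_mul_of_nonneg_right e1 hc0.le, mul_le_mul_of_nonneg_left e2 hs0]
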